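/- For every a ∈ ℝ and every T > 0 there exists a constant C > 0 such that for all t ∈ (0, T], all x ∈ ℝ, and all ε with 0 < ε ≤ min(1, t/√2): |(∫₀^t ∫_ℝ |Γ_a(t−s, x−y) − Γ_a(t−ε/√2−s, x+ε/√2−y) − Γ_a(t−ε/√2−s, x−ε/√2−y) + Γ_a(t−√2·ε−s, x−y)|² dy ds)^{1/2} − ε/2| ≤ C·ε^{3/2}. -/

import Mathlib

open MeasureTheory Real

/-- The damped wave kernel: the fundamental solution of the critically damped
wave operator `∂_tt − ∂_xx + a ∂_t + a²/4`. -/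
noncomputable def dampedKernel (a t x : ℝ) : ℝ :=
  if |x| < t then (1 / 2) * Real.exp (-(a * t) / 2) else 0

/-- The rectangular increment of the damped wave kernel along the two characteristic directions. -/
noncomputable def kernelIncrement (a h r z : ℝ) : ℝ :=
  dampedKernel a r z - dampedKernel a (r - h) (z + h) - dampedKernel a (r - h) (z - h)
    + dampedKernel a (r - 2 * h) z

/-- The time-`r` section of the characteristic diamond of side `√2 * h` with vertex at the
origin. -/
def diamondSection (h r : ℝ) : Set ℝ := Set.Ioo (-r) r ∩ Set.Icc (r - 2 * h) (2 * h - r)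

/-- The length of `diamondSection h r`. -/
noncomputable def diamondLength (h r : ℝ) : ℝ := max 0 (min (2 * r) (4 * h - 2 * r))

lemma abs_exp_sub_one_le_mul_exp_abs (x : ℝ) : |exp x - 1| ≤ |x| * exp |x| := by
  have h1 := add_one_le_exp x
  have h2 := add_one_le_exp (-x)
  have h3 : exp x * exp (-x) = 1 := by rw [← exp_add]; simp
  have h4 : exp x - 1 ≤ x * exp x := by nlinarith [exp_pos x]
  have h5 : (1 : ℝ) ≤ exp |x| := one_le_exp (abs_nonneg x)
  rw [abs_le]
  constructor
  · nlinarith [neg_abs_le x, abs_nonneg x]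
  · calc exp x - 1 ≤ x * exp x := h4
      _ ≤ |x| * exp x := by gcongr; exact le_abs_self x
      _ ≤ |x| * exp |x| := by gcongr; exact le_abs_self x

lemma volume_real_diamondSection {h r : ℝ} :
    volume.real (diamondSection h r) = diamondLength h r := by
  unfold diamondSection diamondLength
  rcases le_or_gt r h with hr | hr
  · rw [Set.inter_eq_left.2, Real.volume_real_Ioo, max_comm, min_eq_left (by linarith)]
    · congr 1; ring
    · rintro z ⟨h1, h2⟩; constructor <;> linarith
  · rw [Set.inter_eq_right.2, Real.volume_real_Icc, max_comm, min_eq_right (by linarith)]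
    · congr 1; ring
    · rintro z ⟨h1, h2⟩; constructor <;> linarith

lemma measurableSet_diamondSection (h r : ℝ) : MeasurableSet (diamondSection h r) :=
  measurableSet_Ioo.inter measurableSet_Icc

lemma continuous_diamondLength (h : ℝ) : Continuous (diamondLength h) := by
  unfold diamondLength; fun_prop

lemma integral_diamondLength {h t : ℝ} (hh : 0 ≤ h) (ht : 2 * h ≤ t) :
    ∫ r in (0 : ℝ)..t, diamondLength h r = 2 * h ^ 2 := by
  have hi : ∀ b c : ℝ, IntervalIntegrable (diamondLength h) volume b c :=
    fun b c => (continuous_diamondLength h).intervalIntegrable b c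
  rw [← intervalIntegral.integral_add_adjacent_intervals (hi 0 h) (hi h t),
    ← intervalIntegral.integral_add_adjacent_intervals (hi h (2 * h)) (hi (2 * h) t)]
  have e1 : ∫ r in (0 : ℝ)..h, diamondLength h r = ∫ r in (0 : ℝ)..h, 2 * r := by
    refine intervalIntegral.integral_congr fun r hr => ?_
    rw [Set.uIcc_of_le hh] at hr
    simp only [diamondLength]
    rw [min_eq_left (by linarith [hr.2]), max_eq_right (by linarith [hr.1])]
  have e2 : ∫ r in h..(2 * h), diamondLength h r = ∫ r in h..(2 * h), (4 * h - 2 * r) := by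
    refine intervalIntegral.integral_congr fun r hr => ?_
    rw [Set.uIcc_of_le (by linarith)] at hr
    simp only [diamondLength]
    rw [min_eq_right (by linarith [hr.1]), max_eq_right (by linarith [hr.2])]
  have e3 : ∫ r in (2 * h)..t, diamondLength h r = ∫ r in (2 * h)..t, (0 : ℝ) := by
    refine intervalIntegral.integral_congr fun r hr => ?_
    rw [Set.uIcc_of_le ht] at hr
    simp only [diamondLength]
    rw [min_eq_right (by linarith [hr.1]), max_eq_left (by linarith [hr.1])]
  have e4 : ∀ b c : ℝ, ∫ r in b..c, 2 * r = c ^ 2 - b ^ 2 := fun b c => by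
    rw [intervalIntegral.integral_const_mul, integral_id]; ring
  rw [e1, e2, e3, intervalIntegral.integral_sub (by simp)
    (by apply Continuous.intervalIntegrable; fun_prop), e4, e4]
  simp only [intervalIntegral.integral_const, smul_eq_mul]
  ring

lemma measurable_dampedKernel (a : ℝ) : Measurable fun p : ℝ × ℝ => dampedKernel a p.1 p.2 := by
  unfold dampedKernel
  exact Measurable.ite (measurableSet_lt (by fun_prop) (by fun_prop)) (by fun_prop) (by fun_prop)

lemma measurable_kernelIncrement (a h : ℝ) :
    Measurable fun p : ℝ × ℝ => kernelIncrement a h p.1 p.2 := by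
  have hc : ∀ b c : ℝ, Measurable fun p : ℝ × ℝ => dampedKernel a (p.1 - b) (p.2 + c) :=
    fun b c => (measurable_dampedKernel a).comp
      (by fun_prop : Measurable fun p : ℝ × ℝ => (p.1 - b, p.2 + c))
  have h0 := hc 0 0
  have h3 := hc (2 * h) 0
  simp only [sub_zero, add_zero] at h0 h3
  exact ((h0.sub (hc h h)).sub (by simpa only [sub_eq_add_neg] using hc h (-h))).add h3

lemma measurable_kernelIncrement_right (a h r : ℝ) : Measurable (kernelIncrement a h r) :=
  (measurable_kernelIncrement a h).comp (measurable_prodMk_left (x := r))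

/-- The dominating function for the deviation of the squared kernel increment from its leading
term. -/
noncomputable def incrementBound (K h r z : ℝ) : ℝ :=
  (diamondSection h r).indicator (fun _ => K * h) z
    + (Set.Icc (r - 2 * h) r).indicator (fun _ => K * h ^ 2) z
    + (Set.Icc (-r) (2 * h - r)).indicator (fun _ => K * h ^ 2) z
    + (Set.Icc (-r) r).indicator (fun _ => K * h ^ 3) z

lemma exists_abs_sq_kernelIncrement_sub_le (a T : ℝ) (hT : 0 < T) :
    ∃ K : ℝ, 0 ≤ K ∧ ∀ h r z : ℝ, 0 < h → h ≤ 1 → 0 ≤ r → r ≤ T →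
      |kernelIncrement a h r z ^ 2 - (diamondSection h r).indicator (fun _ => (1 / 4 : ℝ)) z|
        ≤ incrementBound K h r z := by
  set N := exp (|a| * (T + 1)) with hN
  have hN1 : 0 < N := exp_pos _
  have ha := abs_nonneg a
  set p := |a| * N with hp
  have hp0 : 0 ≤ p := by positivity
  refine ⟨p + N ^ 2 * p ^ 2 + N ^ 2 * p ^ 4, by positivity, fun h r z h0 h1 r0 rT => ?_⟩
  have hdiff : ∀ u ρ : ℝ, |u| ≤ |a| * ρ → 0 ≤ ρ → ρ ≤ T + 1 → |exp u - 1| ≤ p * ρ := by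
    intro u ρ hu hρ0 hρ
    calc |exp u - 1| ≤ |u| * exp |u| := abs_exp_sub_one_le_mul_exp_abs u
      _ ≤ (|a| * ρ) * N := by
          gcongr
          exact exp_le_exp.2 (hu.trans (by gcongr))
      _ = p * ρ := by rw [hp]; ring
  have hbd : ∀ ρ : ℝ, 0 ≤ ρ → ρ ≤ T → (1 / 2) * exp (-(a * ρ) / 2) ≤ N := by
    intro ρ hρ0 hρ
    have : exp (-(a * ρ) / 2) ≤ N := by
      rw [hN, exp_le_exp]
      have : |a| * ρ ≤ |a| * (T + 1) := by gcongr; linarith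
      nlinarith [neg_abs_le a]
    nlinarith [exp_pos (-(a * ρ) / 2)]
  set q := exp (-(a * h) / 2) with hq
  have hq1 : |q - 1| ≤ p * h := by
    refine hdiff _ h ?_ h0.le (by linarith)
    rw [abs_div, abs_neg, abs_mul, abs_of_pos h0, abs_two]
    have : 0 ≤ |a| * h := by positivity
    linarith
  have hq2 : (q - 1) ^ 2 ≤ (p * h) ^ 2 := by
    rw [← sq_abs]; gcongr
  have hshift : ∀ ρ, exp (-(a * ρ) / 2) = exp (-(a * (ρ - h)) / 2) * q := by
    intro ρ; rw [hq, ← exp_add]; congr 1; ring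
  have h2 : 0 ≤ N ^ 2 * p ^ 2 := by positivity
  have h4 : 0 ≤ N ^ 2 * p ^ 4 := by positivity
  set K := p + N ^ 2 * p ^ 2 + N ^ 2 * p ^ 4 with hK
  have hK0 : 0 ≤ K := by positivity
  have i1 : 0 ≤ (diamondSection h r).indicator (fun _ => K * h) z :=
    Set.indicator_nonneg (fun _ _ => by positivity) _
  have i2 : 0 ≤ (Set.Icc (r - 2 * h) r).indicator (fun _ => K * h ^ 2) z :=
    Set.indicator_nonneg (fun _ _ => by positivity) _
  have i3 : 0 ≤ (Set.Icc (-r) (2 * h - r)).indicator (fun _ => K * h ^ 2) z :=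
    Set.indicator_nonneg (fun _ _ => by positivity) _
  have i4 : 0 ≤ (Set.Icc (-r) r).indicator (fun _ => K * h ^ 3) z :=
    Set.indicator_nonneg (fun _ _ => by positivity) _
  have hstrip : h ≤ r → ((1 / 2) * exp (-(a * r) / 2) - (1 / 2) * exp (-(a * (r - h)) / 2)) ^ 2
      ≤ K * h ^ 2 := by
    intro hr
    have hb := hbd (r - h) (by linarith) (by linarith)
    calc _ = ((1 / 2) * exp (-(a * (r - h)) / 2)) ^ 2 * (q - 1) ^ 2 := by rw [hshift r]; ring
      _ ≤ N ^ 2 * (p * h) ^ 2 := by gcongr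
      _ = N ^ 2 * p ^ 2 * h ^ 2 := by ring
      _ ≤ K * h ^ 2 := by gcongr; linarith
  unfold incrementBound
  by_cases c1 : |z| < r
  swap
  · have hz : kernelIncrement a h r z = 0 := by
      unfold kernelIncrement dampedKernel
      rw [if_neg c1, if_neg, if_neg, if_neg]
      · ring
      all_goals
        rw [abs_lt] at c1 ⊢
        intro hc
        exact c1 ⟨by linarith, by linarith⟩
    have hD : z ∉ diamondSection h r := fun hc => c1 (abs_lt.2 hc.1)
    rw [hz, Set.indicator_of_notMem hD]
    norm_num
    linarith
  have c1' := abs_lt.1 c1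
  by_cases c2 : r - 2 * h ≤ z <;> by_cases c3 : z ≤ 2 * h - r
  · have hz : kernelIncrement a h r z = (1 / 2) * exp (-(a * r) / 2) := by
      unfold kernelIncrement dampedKernel
      rw [if_pos c1, if_neg, if_neg, if_neg]
      · ring
      all_goals
        rw [abs_lt]
        intro hc
        linarith
    have hD : z ∈ diamondSection h r := ⟨c1', c2, c3⟩
    rw [Set.indicator_of_mem hD] at i1
    rw [hz, Set.indicator_of_mem hD, Set.indicator_of_mem hD]
    have hr : r ≤ 2 * h := by linarith
    have e1 : ((1 / 2) * exp (-(a * r) / 2)) ^ 2 - 1 / 4 = (1 / 4) * (exp (-(a * r)) - 1) := by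
      have : exp (-(a * r)) = exp (-(a * r) / 2) ^ 2 := by
        rw [← exp_nat_mul]; congr 1; push_cast; ring
      rw [this]; ring
    have e2 := hdiff (-(a * r)) r (by rw [abs_neg, abs_mul, abs_of_nonneg r0]) r0 (by linarith)
    rw [e1, abs_mul, abs_of_pos (by norm_num : (0 : ℝ) < 1 / 4)]
    have e3 : p * r ≤ p * (2 * h) := by gcongr
    have e4 : p * h ≤ K * h := by gcongr; linarith
    have e5 : 0 ≤ p * h := by positivity
    linarith
  · have hz : kernelIncrement a h r z
        = (1 / 2) * exp (-(a * r) / 2) - (1 / 2) * exp (-(a * (r - h)) / 2) := by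
      unfold kernelIncrement dampedKernel
      rw [if_pos c1, if_neg, if_pos, if_neg]
      · ring
      all_goals
        rw [abs_lt]
        first
          | (intro hc; linarith)
          | (constructor <;> linarith)
    have hD : z ∉ diamondSection h r := fun hc => c3 hc.2.2
    have hS : z ∈ Set.Icc (r - 2 * h) r := ⟨c2, c1'.2.le⟩
    have := hstrip (by linarith)
    rw [hz, Set.indicator_of_notMem hD, Set.indicator_of_mem hS, sub_zero,
      abs_of_nonneg (sq_nonneg _)]
    linarith
  · have hz : kernelIncrement a h r z
        = (1 / 2) * exp (-(a * r) / 2) - (1 / 2) * exp (-(a * (r - h)) / 2) := by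
      unfold kernelIncrement dampedKernel
      rw [if_pos c1, if_pos, if_neg, if_neg]
      · ring
      all_goals
        rw [abs_lt]
        first
          | (intro hc; linarith)
          | (constructor <;> linarith)
    have hD : z ∉ diamondSection h r := fun hc => c2 hc.2.1
    have hS : z ∈ Set.Icc (-r) (2 * h - r) := ⟨c1'.1.le, c3⟩
    have := hstrip (by linarith)
    rw [hz, Set.indicator_of_notMem hD, Set.indicator_of_mem hS, sub_zero,
      abs_of_nonneg (sq_nonneg _)]
    linarith
  · have hz : kernelIncrement a h r z
        = (1 / 2) * exp (-(a * (r - 2 * h)) / 2) * (q - 1) ^ 2 := by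
      unfold kernelIncrement dampedKernel
      rw [if_pos c1, if_pos, if_pos, if_pos, hshift r, hshift (r - h),
        show r - h - h = r - 2 * h by ring]
      · ring
      all_goals
        rw [abs_lt]
        constructor <;> linarith
    have hD : z ∉ diamondSection h r := fun hc => c2 hc.2.1
    have hS : z ∈ Set.Icc (-r) r := ⟨c1'.1.le, c1'.2.le⟩
    have hb := hbd (r - 2 * h) (by linarith) (by linarith)
    have : ((1 / 2) * exp (-(a * (r - 2 * h)) / 2) * (q - 1) ^ 2) ^ 2 ≤ K * h ^ 3 := by
      calc _ ≤ (N * (p * h) ^ 2) ^ 2 := by gcongr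
        _ = N ^ 2 * p ^ 4 * h ^ 4 := by ring
        _ ≤ K * h ^ 3 := by
          gcongr ?_ * ?_
          · linarith
          · exact pow_le_pow_of_le_one h0.le h1 (by norm_num)
    rw [hz, Set.indicator_of_notMem hD, Set.indicator_of_mem hS, sub_zero,
      abs_of_nonneg (sq_nonneg _)]
    linarith

lemma integrable_indicator_const_of_volume_ne_top {s : Set ℝ} (hs : MeasurableSet s)
    (hv : volume s ≠ ⊤) (c : ℝ) : Integrable (s.indicator fun _ => c) :=
  (integrable_indicator_iff hs).2 (integrableOn_const hv)

lemma volume_diamondSection_ne_top (h r : ℝ) : volume (diamondSection h r) ≠ ⊤ :=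
  ((measure_mono Set.inter_subset_left).trans_lt measure_Ioo_lt_top).ne

lemma integrable_incrementBound (K h r : ℝ) : Integrable (incrementBound K h r) := by
  have hI : ∀ b c d : ℝ, Integrable ((Set.Icc b c).indicator fun _ => d) := fun b c d =>
    integrable_indicator_const_of_volume_ne_top measurableSet_Icc measure_Icc_lt_top.ne d
  exact (((integrable_indicator_const_of_volume_ne_top (measurableSet_diamondSection h r)
    (volume_diamondSection_ne_top h r) _).add (hI _ _ _)).add (hI _ _ _)).add (hI _ _ _)

lemma integral_incrementBound {K h r : ℝ} (hh : 0 ≤ h) (hr : 0 ≤ r) :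
    ∫ z, incrementBound K h r z = K * h * diamondLength h r + K * h ^ 3 * (4 + 2 * r) := by
  have hI : ∀ b c d : ℝ, Integrable ((Set.Icc b c).indicator fun _ => d) := fun b c d =>
    integrable_indicator_const_of_volume_ne_top measurableSet_Icc measure_Icc_lt_top.ne d
  have hD := integrable_indicator_const_of_volume_ne_top (measurableSet_diamondSection h r)
    (volume_diamondSection_ne_top h r) (K * h)
  have hsplit : incrementBound K h r = (diamondSection h r).indicator (fun _ => K * h)
      + (Set.Icc (r - 2 * h) r).indicator (fun _ => K * h ^ 2)
      + (Set.Icc (-r) (2 * h - r)).indicator (fun _ => K * h ^ 2)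
      + (Set.Icc (-r) r).indicator (fun _ => K * h ^ 3) := rfl
  rw [hsplit, integral_add' ((hD.add (hI _ _ _)).add (hI _ _ _)) (hI _ _ _),
    integral_add' (hD.add (hI _ _ _)) (hI _ _ _), integral_add' hD (hI _ _ _)]
  simp only [integral_indicator_const _ (measurableSet_diamondSection h r),
    integral_indicator_const _ measurableSet_Icc, volume_real_diamondSection, smul_eq_mul]
  rw [Real.volume_real_Icc_of_le (by linarith), Real.volume_real_Icc_of_le (by linarith),
    Real.volume_real_Icc_of_le (by linarith)]
  ring

lemma exists_abs_integral_sq_kernelIncrement_sub_le (a T : ℝ) (hT : 0 < T) :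
    ∃ K : ℝ, 0 ≤ K ∧ ∀ h t : ℝ, 0 < h → h ≤ 1 → 2 * h ≤ t → t ≤ T →
      |(∫ r in (0 : ℝ)..t, ∫ z, kernelIncrement a h r z ^ 2) - h ^ 2 / 2| ≤ K * h ^ 3 := by
  obtain ⟨K, hK, hpt⟩ := exists_abs_sq_kernelIncrement_sub_le a T hT
  refine ⟨K * (2 + (4 + 2 * T) * T), by positivity, fun h t h0 h1 ht htT => ?_⟩
  have ht0 : 0 ≤ t := by linarith
  set G : ℝ → ℝ := fun r => ∫ z, kernelIncrement a h r z ^ 2 with hG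
  set B : ℝ → ℝ := fun r => K * h * diamondLength h r + K * h ^ 3 * (4 + 2 * T) with hB
  have hmeas : Measurable fun p : ℝ × ℝ => kernelIncrement a h p.1 p.2 ^ 2 :=
    (measurable_kernelIncrement a h).pow_const 2
  have hGm : StronglyMeasurable G := hmeas.stronglyMeasurable.integral_prod_right
  have hdev : ∀ r, 0 ≤ r → r ≤ T → |G r - diamondLength h r / 4| ≤ B r := by
    intro r r0 rT
    have hD := integrable_indicator_const_of_volume_ne_top (measurableSet_diamondSection h r)
      (volume_diamondSection_ne_top h r) (1 / 4)
    have hsm : Measurable fun z => kernelIncrement a h r z ^ 2 :=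
      (measurable_kernelIncrement_right a h r).pow_const 2
    have hb : ∀ z, ‖kernelIncrement a h r z ^ 2
        - (diamondSection h r).indicator (fun _ => (1 / 4 : ℝ)) z‖ ≤ incrementBound K h r z :=
      fun z => hpt h r z h0 h1 r0 rT
    have hdevi : Integrable fun z => kernelIncrement a h r z ^ 2
        - (diamondSection h r).indicator (fun _ => (1 / 4 : ℝ)) z := by
      refine (integrable_incrementBound K h r).mono' ?_ (Filter.Eventually.of_forall hb)
      exact (hsm.sub (measurable_const.indicator
        (measurableSet_diamondSection h r))).aestronglyMeasurable
    have hsq : Integrable fun z => kernelIncrement a h r z ^ 2 := by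
      simpa only [Pi.add_def, sub_add_cancel] using hdevi.add hD
    have hle := norm_integral_le_of_norm_le (integrable_incrementBound K h r)
      (Filter.Eventually.of_forall hb)
    rw [integral_sub hsq hD, integral_indicator_const _ (measurableSet_diamondSection h r),
      volume_real_diamondSection, integral_incrementBound h0.le r0, smul_eq_mul,
      Real.norm_eq_abs] at hle
    calc |G r - diamondLength h r / 4| = |G r - diamondLength h r * (1 / 4)| := by
          congr 1; ring
      _ ≤ _ := hle
      _ ≤ B r := by simp only [hB]; gcongr
  have hlen : IntervalIntegrable (fun r => diamondLength h r / 4) volume 0 t :=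
    ((continuous_diamondLength h).div_const 4).intervalIntegrable _ _
  have hBc : Continuous B := by
    have := continuous_diamondLength h
    fun_prop
  have hBi : IntervalIntegrable B volume 0 t := hBc.intervalIntegrable _ _
  have hae : ∀ r ∈ Set.Ioc 0 t, ‖G r - diamondLength h r / 4‖ ≤ B r :=
    fun r hr => hdev r hr.1.le (hr.2.trans htT)
  have hdi : IntervalIntegrable (fun r => G r - diamondLength h r / 4) volume 0 t := by
    refine hBi.mono_fun' (hGm.aestronglyMeasurable.sub
      ((continuous_diamondLength h).div_const 4).aestronglyMeasurable) ?_
    rw [Set.uIoc_of_le ht0]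
    exact (ae_restrict_iff' measurableSet_Ioc).2 (Filter.Eventually.of_forall hae)
  have hGi : IntervalIntegrable G volume 0 t := by
    simpa only [Pi.add_def, sub_add_cancel] using hdi.add hlen
  have hle := intervalIntegral.norm_integral_le_of_norm_le ht0
    (Filter.Eventually.of_forall hae) hBi
  rw [intervalIntegral.integral_sub hGi hlen, intervalIntegral.integral_div,
    integral_diamondLength h0.le ht, Real.norm_eq_abs] at hle
  have hBint : ∫ r in (0 : ℝ)..t, B r = K * h * (2 * h ^ 2) + K * h ^ 3 * (4 + 2 * T) * t := by
    simp only [hB]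
    rw [intervalIntegral.integral_add
      (((continuous_diamondLength h).const_mul _).intervalIntegrable _ _) (by simp),
      intervalIntegral.integral_const_mul, integral_diamondLength h0.le ht,
      intervalIntegral.integral_const]
    simp only [smul_eq_mul]
    ring
  calc _ = |(∫ r in (0 : ℝ)..t, G r) - 2 * h ^ 2 / 4| := by congr 1; ring
    _ ≤ K * h * (2 * h ^ 2) + K * h ^ 3 * (4 + 2 * T) * t := hle.trans hBint.le
    _ ≤ K * h * (2 * h ^ 2) + K * h ^ 3 * (4 + 2 * T) * T := by gcongr
    _ = _ := by ring

lemma integral_sq_increment_eq (a t x h : ℝ) (ht : 0 ≤ t) :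
    (∫ s in Set.Ioc (0 : ℝ) t, ∫ y : ℝ,
        |dampedKernel a (t - s) (x - y) - dampedKernel a (t - h - s) (x + h - y)
          - dampedKernel a (t - h - s) (x - h - y) + dampedKernel a (t - 2 * h - s) (x - y)| ^ 2)
      = ∫ r in (0 : ℝ)..t, ∫ z, kernelIncrement a h r z ^ 2 := by
  have hsub := intervalIntegral.integral_comp_sub_left (a := 0) (b := t)
    (fun r => ∫ z, kernelIncrement a h r z ^ 2) t
  rw [sub_self, sub_zero] at hsub
  rw [← hsub, intervalIntegral.integral_of_le ht]
  refine integral_congr_ae (Filter.Eventually.of_forall fun s => ?_)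
  dsimp only
  rw [← integral_sub_left_eq_self (fun z => kernelIncrement a h (t - s) z ^ 2) volume x]
  refine integral_congr_ae (Filter.Eventually.of_forall fun y => ?_)
  dsimp only
  rw [sq_abs, kernelIncrement, sub_right_comm t h s, sub_right_comm t (2 * h) s,
    sub_right_comm x h y, sub_add_eq_add_sub x y h]

lemma abs_sqrt_sub_le_of_abs_sub_sq_le {I b c : ℝ} (hI : 0 ≤ I) (hb : 0 < b)
    (h : |I - b ^ 2| ≤ c) : |√I - b| ≤ c / b := by
  rw [le_div_iff₀ hb]
  have hs := sqrt_nonneg I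
  have e : I - b ^ 2 = (√I - b) * (√I + b) := by
    nlinarith [sq_sqrt hI]
  rw [e, abs_mul, abs_of_pos (by positivity : 0 < √I + b)] at h
  exact le_trans (by gcongr; linarith) h

theorem stmt9 (a : ℝ) (T : ℝ) (hT : 0 < T) :
    ∃ C : ℝ, 0 < C ∧ ∀ t ∈ Set.Ioc (0 : ℝ) T, ∀ x : ℝ, ∀ ε : ℝ,
      0 < ε → ε ≤ min 1 (t / Real.sqrt 2) →
      |Real.sqrt (∫ s in Set.Ioc (0 : ℝ) t, ∫ y : ℝ,
          |dampedKernel a (t - s) (x - y)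
            - dampedKernel a (t - ε / Real.sqrt 2 - s) (x + ε / Real.sqrt 2 - y)
            - dampedKernel a (t - ε / Real.sqrt 2 - s) (x - ε / Real.sqrt 2 - y)
            + dampedKernel a (t - Real.sqrt 2 * ε - s) (x - y)| ^ 2)
        - ε / 2| ≤ C * ε ^ (3 / 2 : ℝ) := by
  obtain ⟨K, hK, hmain⟩ := exists_abs_integral_sq_kernelIncrement_sub_le a T hT
  refine ⟨2 * K + 1, by positivity, ?_⟩
  rintro t ⟨ht0, htT⟩ x ε hε hεle
  have hε1 : ε ≤ 1 := hεle.trans (min_le_left _ _)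
  have hεt : ε ≤ t / √2 := hεle.trans (min_le_right _ _)
  have h2 : 0 < √2 := by positivity
  have h22 : √2 * √2 = 2 := mul_self_sqrt (by norm_num)
  have h21 : 1 ≤ √2 := one_le_sqrt.2 (by norm_num)
  rw [le_div_iff₀ h2] at hεt
  have h2h : √2 * ε = 2 * (ε / √2) := by
    field_simp
    linear_combination h22
  have hsq : (ε / √2) ^ 2 / 2 = (ε / 2) ^ 2 := by
    rw [div_pow, sq_sqrt (by norm_num)]; ring
  rw [h2h]
  have hle : ε / √2 ≤ ε := div_le_self hε.le h21
  have hpos : 0 < ε / √2 := by positivity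
  set h := ε / √2
  rw [integral_sq_increment_eq a t x h ht0.le]
  have hb := hmain h t hpos (hle.trans hε1) (by linarith) htT
  rw [hsq] at hb
  have hI : 0 ≤ ∫ r in (0 : ℝ)..t, ∫ z, kernelIncrement a h r z ^ 2 :=
    intervalIntegral.integral_nonneg ht0.le fun r _ => integral_nonneg fun z => sq_nonneg _
  have hpow : ε ^ 2 ≤ ε ^ (3 / 2 : ℝ) := by
    rw [← rpow_two]
    exact rpow_le_rpow_of_exponent_ge hε hε1 (by norm_num)
  calc _ ≤ K * h ^ 3 / (ε / 2) := abs_sqrt_sub_le_of_abs_sub_sq_le hI (by positivity) hb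
    _ ≤ K * ε ^ 3 / (ε / 2) := by gcongr
    _ = 2 * K * ε ^ 2 := by field_simp
    _ ≤ (2 * K + 1) * ε ^ (3 / 2 : ℝ) := by gcongr; linarith
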